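/- For any two states ω¹, ω² of a finite-dimensional bipartite system AB with ε = ½‖ω¹−ω²‖₁ < 1, the conditional entropy H(A|B)_ω = H(ω_AB) − H(ω_B) satisfies |H(A|B)_{ω¹} − H(A|B)_{ω²}| ≤ 2ε log(dim H_A) + (1+ε)·h₂(ε/(1+ε)). -/

import Mathlib

open Matrix
open scoped ComplexOrder

noncomputable section

/-- The von Neumann entropy, extended to the cone of positive trace-class operators by
`H(ρ) = Tr η(ρ) − η(Tr ρ)` with `η(x) = −x log x` (computed spectrally). -/
def vnEnt {n : Type*} [Fintype n] [DecidableEq n] (ρ : Matrix n n ℂ) : ℝ :=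
  if h : ρ.IsHermitian then
    (∑ i, Real.negMulLog (h.eigenvalues i)) - Real.negMulLog (∑ i, h.eigenvalues i)
  else 0

/-- A state (density operator): positive semidefinite with unit trace. -/
def IsState {n : Type*} [Fintype n] (ρ : Matrix n n ℂ) : Prop :=
  ρ.PosSemidef ∧ ρ.trace = 1

/-- Partial trace over the second tensor factor. -/
def mFst {a b : Type*} [Fintype b] (ω : Matrix (a × b) (a × b) ℂ) : Matrix a a ℂ :=
  Matrix.of fun i j => ∑ k : b, ω (i, k) (j, k)

/-- Partial trace over the first tensor factor. -/
def mSnd {a b : Type*} [Fintype a] (ω : Matrix (a × b) (a × b) ℂ) : Matrix b b ℂ :=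
  Matrix.of fun i j => ∑ k : a, ω (k, i) (k, j)

/-- The trace norm of a matrix: the sum of its singular values. -/
def traceNorm {n : Type*} [Fintype n] [DecidableEq n] (M : Matrix n n ℂ) : ℝ :=
  ∑ i, Real.sqrt ((Matrix.posSemidef_conjTranspose_mul_self M).1.eigenvalues i)

/-- Conditional entropy `H(A|B)_ω = H(ω_AB) − H(ω_B)`. -/
def condEnt {a b : Type*} [Fintype a] [DecidableEq a] [Fintype b] [DecidableEq b]
    (ω : Matrix (a × b) (a × b) ℂ) : ℝ :=
  vnEnt ω - vnEnt (mSnd ω)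

/-!
Let `P` and `N` be the positive and negative parts of `ω₁ - ω₂`, both of trace `ε`, so that
`ω₁ + N = ω₂ + P`. On the positive cone `H(A|B)` is superadditive (strong subadditivity), it is
subadditive up to a binary entropy of the weights, and it is bounded by the trace times
`log (dim H_A)`; applied to both sides of `ω₁ + N = ω₂ + P`, these three facts give the bound.

Since `H(A|B)_ω = -D(ω ‖ 1 ⊗ ω_B)`, superadditivity is the joint convexity of the relative entropy
`D`. The latter comes from the integral representation
`D(A ‖ B) - Tr A + Tr B = ∫₀^∞ t / (1 + t)² ⟪A - B, (L_A + t R_B)⁻¹ (A - B)⟫ dt`,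
whose integrand is, for every `t`, a supremum of functions which are linear in `(A, B)`.
-/

open scoped MatrixOrder Kronecker Topology

section Eigenbases

variable {n : Type*} [Fintype n] [DecidableEq n] {A B : Matrix n n ℂ}

lemma continuousOn_real_spectrum (A : Matrix n n ℂ) (f : ℝ → ℝ) :
    ContinuousOn f (spectrum ℝ A) :=
  A.finite_real_spectrum.continuousOn f

lemma cfc_eq_conj_diagonal (hA : A.IsHermitian) (f : ℝ → ℝ) :
    cfc f A = (hA.eigenvectorUnitary : Matrix n n ℂ) *
      diagonal (fun i => (f (hA.eigenvalues i) : ℂ)) *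
      (hA.eigenvectorUnitary : Matrix n n ℂ)ᴴ := by
  rw [hA.cfc_eq, IsHermitian.cfc, Unitary.conjStarAlgAut_apply]
  rfl

lemma cfc_add_smul_one (hA : A.IsHermitian) (f : ℝ → ℝ) (r : ℝ) :
    cfc f (A + r • 1) = cfc (fun x => f (x + r)) A := by
  have h : A + r • 1 = cfc (fun x => x + r) A := by
    rw [cfc_add_const r (fun x => x) A (ha := hA.isSelfAdjoint), cfc_id' ℝ A hA.isSelfAdjoint,
      Algebra.algebraMap_eq_smul_one]
  rw [h, ← cfc_comp' f (fun x => x + r) A ((A.finite_real_spectrum.image _).continuousOn f)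
    (ha := hA.isSelfAdjoint)]

lemma re_trace_cfc (hA : A.IsHermitian) (f : ℝ → ℝ) :
    (cfc f A).trace.re = ∑ i, f (hA.eigenvalues i) := by
  rw [cfc_eq_conj_diagonal hA, trace_mul_cycle,
    ← star_eq_conjTranspose, Unitary.coe_star_mul_self, Matrix.one_mul, trace_diagonal,
    Complex.re_sum]
  simp only [Complex.ofReal_re]

lemma re_trace_eq_sum_eigenvalues (hA : A.IsHermitian) :
    A.trace.re = ∑ i, hA.eigenvalues i := by
  rw [← re_trace_cfc hA fun x => x, cfc_id' ℝ A hA.isSelfAdjoint]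

/-- The matrix of `Y` with respect to the eigenbases of `A` (rows) and of `B` (columns). -/
def eigenCoords (hA : A.IsHermitian) (hB : B.IsHermitian) (Y : Matrix n n ℂ) : Matrix n n ℂ :=
  (hA.eigenvectorUnitary : Matrix n n ℂ)ᴴ * Y * (hB.eigenvectorUnitary : Matrix n n ℂ)

lemma eigenCoords_surjective (hA : A.IsHermitian) (hB : B.IsHermitian) :
    Function.Surjective (eigenCoords hA hB) := fun Z => by
  refine ⟨(hA.eigenvectorUnitary : Matrix n n ℂ) * Z *
    (hB.eigenvectorUnitary : Matrix n n ℂ)ᴴ, ?_⟩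
  simp only [eigenCoords, ← star_eq_conjTranspose, Matrix.mul_assoc, Unitary.coe_star_mul_self,
    Matrix.mul_one]
  rw [← Matrix.mul_assoc, Unitary.coe_star_mul_self, Matrix.one_mul]

lemma eigenCoords_self_left (hA : A.IsHermitian) (hB : B.IsHermitian) :
    eigenCoords hA hB A
      = diagonal (fun i => (hA.eigenvalues i : ℂ)) * eigenCoords hA hB 1 := by
  have hstar : (hA.eigenvectorUnitary : Matrix n n ℂ)ᴴ * A
      = diagonal (fun i => (hA.eigenvalues i : ℂ)) * (hA.eigenvectorUnitary : Matrix n n ℂ)ᴴ := by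
    have h := congrArg ((hA.eigenvectorUnitary : Matrix n n ℂ)ᴴ * ·)
      (cfc_eq_conj_diagonal hA fun x => x)
    simp only [cfc_id' ℝ A hA.isSelfAdjoint, ← Matrix.mul_assoc] at h
    rwa [← star_eq_conjTranspose, Unitary.coe_star_mul_self, Matrix.one_mul] at h
  rw [eigenCoords, hstar, eigenCoords, Matrix.mul_one, Matrix.mul_assoc]

lemma trace_cfc_mul_mul_cfc_mul_conjTranspose (hA : A.IsHermitian) (hB : B.IsHermitian)
    (f g : ℝ → ℝ) (Y Z : Matrix n n ℂ) :
    (cfc f A * Y * cfc g B * Zᴴ).trace = ∑ i, ∑ j,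
      ((f (hA.eigenvalues i) * g (hB.eigenvalues j) : ℝ) : ℂ) *
        (eigenCoords hA hB Y i j * star (eigenCoords hA hB Z i j)) := by
  have hcycle : (cfc f A * Y * cfc g B * Zᴴ).trace
      = (diagonal (fun i => (f (hA.eigenvalues i) : ℂ)) * eigenCoords hA hB Y *
          diagonal (fun j => (g (hB.eigenvalues j) : ℂ)) * (eigenCoords hA hB Z)ᴴ).trace := by
    rw [cfc_eq_conj_diagonal hA, cfc_eq_conj_diagonal hB]
    simp only [eigenCoords, conjTranspose_mul, conjTranspose_conjTranspose, Matrix.mul_assoc]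
    rw [trace_mul_comm]
    simp only [Matrix.mul_assoc]
  rw [hcycle, trace]
  refine Finset.sum_congr rfl fun i _ => ?_
  rw [diag_apply, mul_apply]
  refine Finset.sum_congr rfl fun j _ => ?_
  rw [mul_diagonal, diagonal_mul, conjTranspose_apply, Complex.ofReal_mul]
  ring

/-- The squared overlap `|⟨uᵢ, vⱼ⟩|²` of eigenvectors `uᵢ` of `A` and `vⱼ` of `B`. -/
def overlap (hA : A.IsHermitian) (hB : B.IsHermitian) (i j : n) : ℝ :=
  Complex.normSq (eigenCoords hA hB 1 i j)

lemma re_trace_cfc_mul_cfc (hA : A.IsHermitian) (hB : B.IsHermitian) (f g : ℝ → ℝ) :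
    (cfc f A * cfc g B).trace.re
      = ∑ i, ∑ j, overlap hA hB i j * (f (hA.eigenvalues i) * g (hB.eigenvalues j)) := by
  have h := congrArg Complex.re (trace_cfc_mul_mul_cfc_mul_conjTranspose hA hB f g 1 1)
  simp only [conjTranspose_one, Matrix.mul_one, Complex.re_sum, Complex.star_def,
    Complex.mul_conj, Complex.re_ofReal_mul, Complex.ofReal_re] at h
  simp only [h, overlap, mul_comm]

lemma re_trace_mul_cfc (hA : A.IsHermitian) (hB : B.IsHermitian) (g : ℝ → ℝ) :
    (A * cfc g B).trace.re
      = ∑ i, ∑ j, overlap hA hB i j * (hA.eigenvalues i * g (hB.eigenvalues j)) := by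
  rw [← re_trace_cfc_mul_cfc hA hB (fun x => x) g, cfc_id' ℝ A hA.isSelfAdjoint]

end Eigenbases

section Support

variable {n : Type*} [Fintype n]

lemma re_trace_nonneg {A : Matrix n n ℂ} (hA : A.PosSemidef) : 0 ≤ A.trace.re :=
  (Complex.le_def.mp hA.trace_nonneg).1

/-- The support of `A` is contained in that of `B`, i.e. `ker B ⊆ ker A`; this is when the relative
entropy of `A` with respect to `B` is finite. -/
def SupportLE (A B : Matrix n n ℂ) : Prop :=
  ∀ v, B *ᵥ v = 0 → A *ᵥ v = 0

namespace SupportLE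

variable {A A₁ A₂ B B₁ B₂ C : Matrix n n ℂ}

lemma refl (A : Matrix n n ℂ) : SupportLE A A := fun _ => id

lemma trans (hAB : SupportLE A B) (hBC : SupportLE B C) : SupportLE A C :=
  fun v hv => hAB v (hBC v hv)

lemma of_smul {r : ℝ} (h : SupportLE A (r • B)) : SupportLE A B :=
  fun v hv => h v (by rw [smul_mulVec, hv, smul_zero])

lemma of_le (hA : A.PosSemidef) (hAB : A ≤ B) : SupportLE A B := fun v hv => by
  rw [← hA.dotProduct_mulVec_zero_iff]
  refine le_antisymm ?_ (hA.dotProduct_mulVec_nonneg v)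
  have h := (Matrix.le_iff.mp hAB).dotProduct_mulVec_nonneg v
  rwa [sub_mulVec, hv, zero_sub, dotProduct_neg, neg_nonneg] at h

lemma add (h₁ : SupportLE A₁ B₁) (h₂ : SupportLE A₂ B₂) (hB₁ : B₁.PosSemidef)
    (hB₂ : B₂.PosSemidef) : SupportLE (A₁ + A₂) (B₁ + B₂) := fun v hv => by
  have hv₁ := of_le hB₁ (le_add_of_nonneg_right hB₂.nonneg) v hv
  have hv₂ := of_le hB₂ (le_add_of_nonneg_left hB₁.nonneg) v hv
  rw [add_mulVec, h₁ v hv₁, h₂ v hv₂, add_zero]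

lemma trace_smul_one [DecidableEq n] (hA : A.PosSemidef) : SupportLE A (A.trace.re • 1) :=
  fun v hv => by
    rw [smul_mulVec, one_mulVec, smul_eq_zero] at hv
    rcases hv with htr | rfl
    · have hA0 : A.trace = 0 :=
        Complex.ext htr (Complex.le_def.mp hA.trace_nonneg).2.symm
      rw [hA.trace_eq_zero_iff.mp hA0, zero_mulVec]
    · exact mulVec_zero A

lemma overlap_eq_zero_or [DecidableEq n] (h : SupportLE A B) (hA : A.IsHermitian)
    (hB : B.IsHermitian) {i j : n} (hj : hB.eigenvalues j = 0) :
    overlap hA hB i j = 0 ∨ hA.eigenvalues i = 0 := by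
  have hAv : A *ᵥ ⇑(hB.eigenvectorBasis j) = 0 :=
    h _ (by rw [hB.mulVec_eigenvectorBasis, hj, zero_smul])
  have hcoords : eigenCoords hA hB A i j = 0 := by
    rw [eigenCoords, Matrix.mul_assoc, mul_apply]
    exact Finset.sum_eq_zero fun k _ => mul_eq_zero_of_right _ (congrFun hAv k)
  rw [eigenCoords_self_left, diagonal_mul, mul_eq_zero, Complex.ofReal_eq_zero] at hcoords
  exact hcoords.symm.imp_left Complex.normSq_eq_zero.mpr

end SupportLE

end Support

section RelativeEntropy

variable {n : Type*} [Fintype n] [DecidableEq n] {A B : Matrix n n ℂ}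

/-- Umegaki's relative entropy `Tr A (log A - log B)`. Since `Real.log 0 = 0`, this is the usual
value when `SupportLE A B`, and a junk value otherwise. -/
def relEnt (A B : Matrix n n ℂ) : ℝ :=
  (A * cfc Real.log A).trace.re - (A * cfc Real.log B).trace.re

/-- The Kullback–Leibler divergence of two masses `a` and `b`. -/
def klTerm (a b : ℝ) : ℝ :=
  a * Real.log a - a * Real.log b - a + b

lemma klTerm_nonneg {a b : ℝ} (ha : 0 ≤ a) (hb : 0 < b) : 0 ≤ klTerm a b := by
  rcases ha.eq_or_lt with rfl | ha
  · simp [klTerm, hb.le]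
  have h := mul_le_mul_of_nonneg_left (Real.log_le_sub_one_of_pos (div_pos hb ha)) ha.le
  rw [Real.log_div hb.ne' ha.ne', mul_sub_one, mul_div_cancel₀ _ ha.ne'] at h
  rw [klTerm]
  linarith

lemma re_trace_mul_cfc_log_self (hA : A.IsHermitian) :
    (A * cfc Real.log A).trace.re = ∑ i, hA.eigenvalues i * Real.log (hA.eigenvalues i) := by
  rw [← re_trace_cfc hA fun x => x * Real.log x,
    cfc_mul (fun x => x) Real.log A (continuousOn_real_spectrum A _)
      (continuousOn_real_spectrum A _), cfc_id' ℝ A hA.isSelfAdjoint]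

lemma relEnt_sub_trace_add_trace (hA : A.IsHermitian) (hB : B.IsHermitian) :
    relEnt A B - A.trace.re + B.trace.re
      = ∑ i, ∑ j, overlap hA hB i j * klTerm (hA.eigenvalues i) (hB.eigenvalues j) := by
  have hlogA := re_trace_cfc_mul_cfc hA hB (fun x => x * Real.log x) fun _ => 1
  have htrA := re_trace_mul_cfc hA hB fun _ => 1
  have htrB := re_trace_cfc_mul_cfc hA hB (fun _ => 1) fun x => x
  rw [cfc_const_one ℝ B hB.isSelfAdjoint, Matrix.mul_one] at hlogA htrA
  rw [cfc_const_one ℝ A hA.isSelfAdjoint, Matrix.one_mul, cfc_id' ℝ B hB.isSelfAdjoint] at htrB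
  rw [relEnt, re_trace_mul_cfc_log_self hA, ← re_trace_cfc hA fun x => x * Real.log x, hlogA,
    re_trace_mul_cfc hA hB, htrA, htrB]
  simp only [← Finset.sum_sub_distrib, ← Finset.sum_add_distrib]
  refine Finset.sum_congr rfl fun i _ => Finset.sum_congr rfl fun j _ => ?_
  rw [klTerm]
  ring

/-- Klein's inequality. -/
lemma trace_sub_trace_le_relEnt (hA : A.PosSemidef) (hB : B.PosSemidef) (h : SupportLE A B) :
    A.trace.re - B.trace.re ≤ relEnt A B := by
  suffices 0 ≤ relEnt A B - A.trace.re + B.trace.re by linarith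
  rw [relEnt_sub_trace_add_trace hA.1 hB.1]
  refine Finset.sum_nonneg fun i _ => Finset.sum_nonneg fun j _ => ?_
  rcases (hB.eigenvalues_nonneg j).eq_or_lt' with hj | hj
  · rcases h.overlap_eq_zero_or hA.1 hB.1 (i := i) hj with hij | hi
    · simp [hij]
    · simp [klTerm, hi, hj]
  · exact mul_nonneg (Complex.normSq_nonneg _) (klTerm_nonneg (hA.eigenvalues_nonneg i) hj)

lemma relEnt_smul_right (hA : A.IsHermitian) (hB : B.IsHermitian) (h : SupportLE A B) {c : ℝ}
    (hc : c ≠ 0) : relEnt A (c • B) = relEnt A B - A.trace.re * Real.log c := by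
  have htr := re_trace_mul_cfc hA hB fun _ => Real.log c
  rw [cfc_const _ B hB.isSelfAdjoint, Algebra.algebraMap_eq_smul_one, Matrix.mul_smul,
    Matrix.mul_one, trace_smul, Complex.smul_re, smul_eq_mul, mul_comm] at htr
  suffices (A * cfc Real.log (c • B)).trace.re
      = (A * cfc Real.log B).trace.re + A.trace.re * Real.log c by
    rw [relEnt, relEnt, this]
    ring
  rw [← cfc_comp_const_mul c Real.log B ((B.finite_real_spectrum.image _).continuousOn _)
    hB.isSelfAdjoint, htr, re_trace_mul_cfc hA hB, re_trace_mul_cfc hA hB]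
  simp only [← Finset.sum_add_distrib]
  refine Finset.sum_congr rfl fun i _ => Finset.sum_congr rfl fun j _ => ?_
  rcases eq_or_ne (hB.eigenvalues j) 0 with hj | hj
  · rcases h.overlap_eq_zero_or hA hB (i := i) hj with hij | hi
    · simp [hij]
    · simp [hi]
  · rw [Real.log_mul hc hj]
    ring

end RelativeEntropy

section LogMonotone

open scoped Matrix.Norms.L2Operator

variable {n : Type*} [Fintype n] {A B X Y : Matrix n n ℂ}

lemma re_trace_mul_nonneg (hA : A.PosSemidef) (hB : B.PosSemidef) : 0 ≤ (A * B).trace.re := by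
  classical
  obtain ⟨C, rfl⟩ := CStarAlgebra.nonneg_iff_eq_star_mul_self.mp hA.nonneg
  rw [Matrix.mul_assoc, trace_mul_comm]
  exact re_trace_nonneg (hB.mul_mul_conjTranspose_same C)

variable [DecidableEq n]

lemma tendsto_re_trace_mul_cfc_log_add_smul_one (hA : A.IsHermitian) (hX : X.IsHermitian)
    (h : SupportLE A X) :
    Filter.Tendsto (fun δ : ℝ => (A * cfc Real.log (X + δ • 1)).trace.re) (𝓝 0)
      (𝓝 (A * cfc Real.log X).trace.re) := by
  simp only [cfc_add_smul_one hX, re_trace_mul_cfc hA hX]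
  refine tendsto_finsetSum _ fun i _ => tendsto_finsetSum _ fun j _ => ?_
  rcases eq_or_ne (hX.eigenvalues j) 0 with hj | hj
  · rcases h.overlap_eq_zero_or hA hX (i := i) hj with hij | hi
    · simp [hij]
    · simp [hi]
  · have hadd : Filter.Tendsto (fun δ => hX.eigenvalues j + δ) (𝓝 0) (𝓝 (hX.eigenvalues j)) := by
      simpa using (continuous_const_add (hX.eigenvalues j)).tendsto 0
    exact ((hadd.log hj).const_mul _).const_mul _

lemma re_trace_mul_cfc_log_le (hA : A.PosSemidef) (hX : X.PosSemidef) (hXY : X ≤ Y)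
    (h : SupportLE A X) : (A * cfc Real.log X).trace.re ≤ (A * cfc Real.log Y).trace.re := by
  have hY : Y.PosSemidef := (hX.nonneg.trans hXY).posSemidef
  refine le_of_tendsto_of_tendsto (b := 𝓝[>] 0)
    ((tendsto_re_trace_mul_cfc_log_add_smul_one hA.1 hX.1 h).mono_left nhdsWithin_le_nhds)
    ((tendsto_re_trace_mul_cfc_log_add_smul_one hA.1 hY.1
      (h.trans (.of_le hX hXY))).mono_left nhdsWithin_le_nhds) ?_
  filter_upwards [self_mem_nhdsWithin] with δ hδ
  have hXδ : (X + δ • 1).PosDef := PosDef.posSemidef_add hX (PosDef.one.smul hδ)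
  have hlog : (cfc Real.log (Y + δ • 1) - cfc Real.log (X + δ • 1)).PosSemidef :=
    CFC.log_le_log (add_le_add_left hXY _) hXδ.isStrictlyPositive
  have htr := re_trace_mul_nonneg hA hlog
  rwa [Matrix.mul_sub, trace_sub, Complex.sub_re, sub_nonneg] at htr

lemma relEnt_nonpos_of_le (hA : A.PosSemidef) (hAB : A ≤ B) : relEnt A B ≤ 0 :=
  sub_nonpos.mpr (re_trace_mul_cfc_log_le hA hA hAB (.refl A))

end LogMonotone

section JointSubadditivity

variable {n : Type*} [Fintype n] {A A₁ A₂ B B₁ B₂ : Matrix n n ℂ}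

/-- A quadratic form whose supremum over `Y` is `⟪A - B, (L_A + t R_B)⁻¹ (A - B)⟫`, with `L_A` and
`R_B` the left and right multiplications; unlike that supremum, it is additive in `(A, B)`. -/
def resolventForm (t : ℝ) (A B Y : Matrix n n ℂ) : ℝ :=
  (2 * ((A - B) * Yᴴ).trace - (A * Y * Yᴴ).trace - t * (Y * B * Yᴴ).trace).re

lemma resolventForm_add (t : ℝ) (A₁ A₂ B₁ B₂ Y : Matrix n n ℂ) :
    resolventForm t (A₁ + A₂) (B₁ + B₂) Y = resolventForm t A₁ B₁ Y + resolventForm t A₂ B₂ Y := by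
  rw [resolventForm, resolventForm, resolventForm, ← Complex.add_re, add_sub_add_comm]
  simp only [Matrix.add_mul, Matrix.mul_add, trace_add]
  congr 1
  ring

variable [DecidableEq n]

lemma resolventForm_eq_sum (hA : A.IsHermitian) (hB : B.IsHermitian) (t : ℝ) (Y : Matrix n n ℂ) :
    resolventForm t A B Y = ∑ i, ∑ j,
      (2 * ((hA.eigenvalues i - hB.eigenvalues j) *
          (eigenCoords hA hB 1 i j * star (eigenCoords hA hB Y i j)).re)
        - (hA.eigenvalues i + t * hB.eigenvalues j) *
            Complex.normSq (eigenCoords hA hB Y i j)) := by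
  have hA₁ := trace_cfc_mul_mul_cfc_mul_conjTranspose hA hB (fun x => x) (fun _ => 1) 1 Y
  have hB₁ := trace_cfc_mul_mul_cfc_mul_conjTranspose hA hB (fun _ => 1) (fun x => x) 1 Y
  have hAY := trace_cfc_mul_mul_cfc_mul_conjTranspose hA hB (fun x => x) (fun _ => 1) Y Y
  have hYB := trace_cfc_mul_mul_cfc_mul_conjTranspose hA hB (fun _ => 1) (fun x => x) Y Y
  simp only [cfc_const_one ℝ A hA.isSelfAdjoint, cfc_const_one ℝ B hB.isSelfAdjoint,
    cfc_id' ℝ A hA.isSelfAdjoint, cfc_id' ℝ B hB.isSelfAdjoint, Matrix.mul_one,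
    Matrix.one_mul] at hA₁ hB₁ hAY hYB
  rw [resolventForm, Matrix.sub_mul, trace_sub, hA₁, hB₁, hAY, hYB]
  simp only [← Finset.sum_sub_distrib, Finset.mul_sum, Complex.re_sum]
  refine Finset.sum_congr rfl fun i _ => Finset.sum_congr rfl fun j _ => ?_
  simp only [one_mul, mul_one, Complex.star_def, Complex.mul_conj]
  simp only [Complex.sub_re, Complex.mul_re, Complex.mul_im, Complex.ofReal_re, Complex.ofReal_im,
    Complex.re_ofNat, Complex.im_ofNat]
  ring

lemma two_mul_re_sub_le {c x : ℝ} (hc : 0 ≤ c) (hx : c = 0 → x = 0) (w z : ℂ) :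
    2 * (x * (w * star z).re) - c * Complex.normSq z ≤ Complex.normSq w * (x ^ 2 / c) := by
  rcases hc.eq_or_lt' with rfl | hc
  · simp [hx rfl]
  have hcross : (x * w * star (c * z)).re = x * c * (w * star z).re := by
    rw [star_mul', Complex.star_def, Complex.conj_ofReal, mul_mul_mul_comm, ← Complex.ofReal_mul,
      Complex.re_ofReal_mul]
  have hsquare : Complex.normSq w * (x ^ 2 / c)
      - (2 * (x * (w * star z).re) - c * Complex.normSq z)
        = Complex.normSq (x * w - c * z) / c := by
    rw [Complex.normSq_sub, ← Complex.star_def, hcross, map_mul, map_mul, Complex.normSq_ofReal,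
      Complex.normSq_ofReal]
    field_simp
    ring
  rw [← sub_nonneg, hsquare]
  exact div_nonneg (Complex.normSq_nonneg _) hc.le

lemma two_mul_re_sub_eq {c x : ℝ} (hx : c = 0 → x = 0) (w : ℂ) :
    2 * (x * (w * star (((x / c : ℝ) : ℂ) * w)).re)
        - c * Complex.normSq (((x / c : ℝ) : ℂ) * w) = Complex.normSq w * (x ^ 2 / c) := by
  rcases eq_or_ne c 0 with rfl | hc
  · simp [hx rfl]
  have hw : (w * star (((x / c : ℝ) : ℂ) * w)).re = x / c * Complex.normSq w := by
    rw [star_mul', Complex.star_def, Complex.conj_ofReal, mul_left_comm, Complex.mul_conj,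
      Complex.re_ofReal_mul, Complex.ofReal_re]
  rw [hw, map_mul, Complex.normSq_ofReal]
  field_simp
  ring

/-- The maximum over `Y` of `resolventForm t A B Y`, in the eigenbases of `A` and `B`. -/
def resolventQuad (hA : A.IsHermitian) (hB : B.IsHermitian) (t : ℝ) : ℝ :=
  ∑ i, ∑ j, overlap hA hB i j *
    ((hA.eigenvalues i - hB.eigenvalues j) ^ 2 / (hA.eigenvalues i + t * hB.eigenvalues j))

lemma eq_zero_of_add_mul_eq_zero {a b t : ℝ} (ha : 0 ≤ a) (hb : 0 ≤ b) (ht : 0 < t)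
    (h : a + t * b = 0) : a = 0 ∧ b = 0 := by
  have hab := (add_eq_zero_iff_of_nonneg ha (mul_nonneg ht.le hb)).mp h
  exact ⟨hab.1, (mul_eq_zero.mp hab.2).resolve_left ht.ne'⟩

lemma sub_eq_zero_of_add_mul_eq_zero {a b t : ℝ} (ha : 0 ≤ a) (hb : 0 ≤ b) (ht : 0 < t)
    (h : a + t * b = 0) : a - b = 0 := by
  obtain ⟨rfl, rfl⟩ := eq_zero_of_add_mul_eq_zero ha hb ht h
  exact sub_self 0

lemma resolventForm_le_resolventQuad (hA : A.PosSemidef) (hB : B.PosSemidef) {t : ℝ} (ht : 0 < t)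
    (Y : Matrix n n ℂ) : resolventForm t A B Y ≤ resolventQuad hA.1 hB.1 t := by
  rw [resolventForm_eq_sum hA.1 hB.1]
  refine Finset.sum_le_sum fun i _ => Finset.sum_le_sum fun j _ => ?_
  have ha := hA.eigenvalues_nonneg i
  have hb := hB.eigenvalues_nonneg j
  exact two_mul_re_sub_le (by positivity) (sub_eq_zero_of_add_mul_eq_zero ha hb ht) _ _

lemma exists_resolventForm_eq (hA : A.PosSemidef) (hB : B.PosSemidef) {t : ℝ} (ht : 0 < t) :
    ∃ Y, resolventForm t A B Y = resolventQuad hA.1 hB.1 t := by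
  obtain ⟨Y, hY⟩ := eigenCoords_surjective hA.1 hB.1 (Matrix.of fun i j =>
    (((hA.1.eigenvalues i - hB.1.eigenvalues j) /
      (hA.1.eigenvalues i + t * hB.1.eigenvalues j) : ℝ) : ℂ) * eigenCoords hA.1 hB.1 1 i j)
  refine ⟨Y, ?_⟩
  rw [resolventForm_eq_sum hA.1 hB.1, hY]
  exact Finset.sum_congr rfl fun i _ => Finset.sum_congr rfl fun j _ => two_mul_re_sub_eq
    (sub_eq_zero_of_add_mul_eq_zero (hA.eigenvalues_nonneg i) (hB.eigenvalues_nonneg j) ht) _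

lemma resolventQuad_add_le (hA₁ : A₁.PosSemidef) (hA₂ : A₂.PosSemidef) (hB₁ : B₁.PosSemidef)
    (hB₂ : B₂.PosSemidef) {t : ℝ} (ht : 0 < t) :
    resolventQuad (hA₁.add hA₂).1 (hB₁.add hB₂).1 t
      ≤ resolventQuad hA₁.1 hB₁.1 t + resolventQuad hA₂.1 hB₂.1 t := by
  obtain ⟨Y, hY⟩ := exists_resolventForm_eq (hA₁.add hA₂) (hB₁.add hB₂) ht
  rw [← hY, resolventForm_add]
  exact add_le_add (resolventForm_le_resolventQuad hA₁ hB₁ ht Y)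
    (resolventForm_le_resolventQuad hA₂ hB₂ ht Y)

/-- The primitive of `t ↦ t / (1 + t) ^ 2 * ((a - b) ^ 2 / (a + t * b))` vanishing at `0`; it tends
to `klTerm a b` at infinity. -/
def klPrimitive (a b t : ℝ) : ℝ :=
  a * (Real.log (1 + t) - Real.log (a + t * b) + Real.log a) + (a - b) / (1 + t) - (a - b)

lemma klPrimitive_zero_right (a b : ℝ) : klPrimitive a b 0 = 0 := by
  simp [klPrimitive]

lemma hasDerivAt_klPrimitive {a b t : ℝ} (ha : 0 ≤ a) (hb : 0 ≤ b) (ht : 0 < t) :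
    HasDerivAt (klPrimitive a b) (t / (1 + t) ^ 2 * ((a - b) ^ 2 / (a + t * b))) t := by
  by_cases h0 : a + t * b = 0
  · obtain ⟨rfl, rfl⟩ := eq_zero_of_add_mul_eq_zero ha hb ht h0
    have hconst : klPrimitive 0 0 = fun _ => 0 := by
      funext s
      simp [klPrimitive]
    simpa [hconst] using hasDerivAt_const t (0 : ℝ)
  have h1 : 1 + t ≠ 0 := by positivity
  have hadd : HasDerivAt (fun s : ℝ => 1 + s) 1 t := (hasDerivAt_id t).const_add 1
  have hmul : HasDerivAt (fun s : ℝ => a + s * b) b t := by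
    simpa using ((hasDerivAt_id t).mul_const b).const_add a
  have hderiv := (((((hadd.log h1).fun_sub (hmul.log h0)).add_const (Real.log a)).const_mul
    a).fun_add ((hasDerivAt_const t (a - b)).fun_div hadd h1)).sub_const (a - b)
  refine hderiv.congr_deriv ?_
  field_simp
  ring

lemma continuousOn_klPrimitive {a b : ℝ} (ha : 0 ≤ a) (hb : 0 ≤ b) :
    ContinuousOn (klPrimitive a b) (Set.Ici 0) := by
  have h1 : ∀ t ∈ Set.Ici (0 : ℝ), 1 + t ≠ 0 := fun t (ht : 0 ≤ t) => by positivity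
  unfold klPrimitive
  rcases ha.eq_or_lt with rfl | ha
  · simp only [zero_mul, zero_add]
    fun_prop (disch := assumption)
  · have h2 : ∀ t ∈ Set.Ici (0 : ℝ), a + t * b ≠ 0 := fun t (ht : 0 ≤ t) => by positivity
    fun_prop (disch := assumption)

lemma tendsto_klPrimitive {a b : ℝ} (ha : 0 ≤ a) (hb : 0 < b) :
    Filter.Tendsto (klPrimitive a b) Filter.atTop (𝓝 (klTerm a b)) := by
  have hdiv : Filter.Tendsto (fun t : ℝ => (a - b) / (1 + t)) Filter.atTop (𝓝 0) :=
    (Filter.tendsto_atTop_add_const_left _ 1 Filter.tendsto_id).const_div_atTop (a - b)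
  have hratio : Filter.Tendsto (fun t : ℝ => b + (a - b) / (1 + t)) Filter.atTop (𝓝 b) := by
    simpa using hdiv.const_add b
  have hlim := (((((hratio.log hb.ne').neg).add_const (Real.log a)).const_mul a).add
    hdiv).sub_const (a - b)
  have hval : a * (-Real.log b + Real.log a) + 0 - (a - b) = klTerm a b := by
    rw [klTerm]
    ring
  rw [hval] at hlim
  refine hlim.congr' ?_
  filter_upwards [Filter.eventually_gt_atTop 0] with t ht
  have h1 : 0 < 1 + t := by positivity
  have h2 : 0 < a + t * b := by positivity
  have hquot : b + (a - b) / (1 + t) = (a + t * b) / (1 + t) := by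
    field_simp
    ring
  rw [hquot, Real.log_div h2.ne' h1.ne', klPrimitive, neg_sub]

/-- The primitive of `t ↦ t / (1 + t) ^ 2 * resolventQuad hA hB t` vanishing at `0`; it computes
the relative entropy at infinity. -/
def relEntPrimitive (hA : A.IsHermitian) (hB : B.IsHermitian) (t : ℝ) : ℝ :=
  ∑ i, ∑ j, overlap hA hB i j * klPrimitive (hA.eigenvalues i) (hB.eigenvalues j) t

lemma relEntPrimitive_zero (hA : A.IsHermitian) (hB : B.IsHermitian) :
    relEntPrimitive hA hB 0 = 0 := by
  simp only [relEntPrimitive, klPrimitive_zero_right, mul_zero, Finset.sum_const_zero]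

lemma hasDerivAt_relEntPrimitive (hA : A.PosSemidef) (hB : B.PosSemidef) {t : ℝ} (ht : 0 < t) :
    HasDerivAt (relEntPrimitive hA.1 hB.1) (t / (1 + t) ^ 2 * resolventQuad hA.1 hB.1 t) t := by
  have hsum := HasDerivAt.fun_sum (u := Finset.univ) fun i _ =>
    HasDerivAt.fun_sum (u := Finset.univ) fun j _ => (hasDerivAt_klPrimitive
      (hA.eigenvalues_nonneg i) (hB.eigenvalues_nonneg j) ht).const_mul (overlap hA.1 hB.1 i j)
  refine hsum.congr_deriv ?_
  simp only [resolventQuad, Finset.mul_sum]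
  exact Finset.sum_congr rfl fun i _ => Finset.sum_congr rfl fun j _ => mul_left_comm _ _ _

lemma continuousOn_relEntPrimitive (hA : A.PosSemidef) (hB : B.PosSemidef) :
    ContinuousOn (relEntPrimitive hA.1 hB.1) (Set.Ici 0) :=
  continuousOn_finsetSum _ fun i _ => continuousOn_finsetSum _ fun j _ => continuousOn_const.mul
    (continuousOn_klPrimitive (hA.eigenvalues_nonneg i) (hB.eigenvalues_nonneg j))

lemma tendsto_relEntPrimitive (hA : A.PosSemidef) (hB : B.PosSemidef) (h : SupportLE A B) :
    Filter.Tendsto (relEntPrimitive hA.1 hB.1) Filter.atTop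
      (𝓝 (relEnt A B - A.trace.re + B.trace.re)) := by
  rw [relEnt_sub_trace_add_trace hA.1 hB.1]
  refine tendsto_finsetSum _ fun i _ => tendsto_finsetSum _ fun j _ => ?_
  rcases (hB.eigenvalues_nonneg j).eq_or_lt' with hj | hj
  · rcases h.overlap_eq_zero_or hA.1 hB.1 (i := i) hj with hij | hi
    · simp [hij]
    · simp [hi, hj, klPrimitive, klTerm]
  · exact (tendsto_klPrimitive (hA.eigenvalues_nonneg i) hj).const_mul _

/-- Joint subadditivity of the relative entropy, equivalent to its joint convexity. -/
lemma relEnt_add_le (hA₁ : A₁.PosSemidef) (hA₂ : A₂.PosSemidef) (hB₁ : B₁.PosSemidef)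
    (hB₂ : B₂.PosSemidef) (h₁ : SupportLE A₁ B₁) (h₂ : SupportLE A₂ B₂) :
    relEnt (A₁ + A₂) (B₁ + B₂) ≤ relEnt A₁ B₁ + relEnt A₂ B₂ := by
  have hA := hA₁.add hA₂
  have hB := hB₁.add hB₂
  have hmono : MonotoneOn (fun t => relEntPrimitive hA₁.1 hB₁.1 t + relEntPrimitive hA₂.1 hB₂.1 t
      - relEntPrimitive hA.1 hB.1 t) (Set.Ici 0) := by
    refine monotoneOn_of_hasDerivWithinAt_nonneg (convex_Ici 0)
      (((continuousOn_relEntPrimitive hA₁ hB₁).add (continuousOn_relEntPrimitive hA₂ hB₂)).sub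
        (continuousOn_relEntPrimitive hA hB))
      (f' := fun t => t / (1 + t) ^ 2 * (resolventQuad hA₁.1 hB₁.1 t
        + resolventQuad hA₂.1 hB₂.1 t - resolventQuad hA.1 hB.1 t)) (fun t ht => ?_) fun t ht => ?_
    all_goals have ht : 0 < t := by simpa using ht
    · rw [mul_sub, mul_add]
      exact (((hasDerivAt_relEntPrimitive hA₁ hB₁ ht).fun_add
        (hasDerivAt_relEntPrimitive hA₂ hB₂ ht)).fun_sub
          (hasDerivAt_relEntPrimitive hA hB ht)).hasDerivWithinAt
    · exact mul_nonneg (by positivity) (sub_nonneg.mpr (resolventQuad_add_le hA₁ hA₂ hB₁ hB₂ ht))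
  have hlim := ((tendsto_relEntPrimitive hA₁ hB₁ h₁).add (tendsto_relEntPrimitive hA₂ hB₂ h₂)).sub
    (tendsto_relEntPrimitive hA hB (h₁.add h₂ hB₁ hB₂))
  have hnonneg := ge_of_tendsto hlim ((Filter.eventually_ge_atTop 0).mono fun t ht => by
    simpa only [relEntPrimitive_zero, add_zero, sub_zero] using hmono Set.self_mem_Ici ht ht)
  simp only [trace_add, Complex.add_re] at hnonneg
  linarith

end JointSubadditivity

section Entropy

variable {n : Type*} [Fintype n] [DecidableEq n] {A B : Matrix n n ℂ}

lemma vnEnt_eq_neg_re_trace_sub (hA : A.IsHermitian) :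
    vnEnt A = -(A * cfc Real.log A).trace.re - Real.negMulLog A.trace.re := by
  rw [vnEnt, dif_pos hA, re_trace_mul_cfc_log_self hA, re_trace_eq_sum_eigenvalues hA,
    ← Finset.sum_neg_distrib]
  simp only [Real.negMulLog, neg_mul]

lemma vnEnt_eq_neg_relEnt (hA : A.IsHermitian) : vnEnt A = -relEnt A (A.trace.re • 1) := by
  rw [vnEnt_eq_neg_re_trace_sub hA, relEnt, ← Algebra.algebraMap_eq_smul_one, cfc_algebraMap,
    Algebra.algebraMap_eq_smul_one, Matrix.mul_smul, Matrix.mul_one, trace_smul, Complex.smul_re,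
    smul_eq_mul, Real.negMulLog]
  ring

lemma vnEnt_add_vnEnt_le (hA : A.PosSemidef) (hB : B.PosSemidef) :
    vnEnt A + vnEnt B ≤ vnEnt (A + B) := by
  have hsmul {M : Matrix n n ℂ} (hM : M.PosSemidef) :
      (M.trace.re • (1 : Matrix n n ℂ)).PosSemidef :=
    PosSemidef.one.smul (re_trace_nonneg hM)
  have h := relEnt_add_le hA hB (hsmul hA) (hsmul hB) (.trace_smul_one hA) (.trace_smul_one hB)
  rw [← add_smul, ← Complex.add_re, ← trace_add] at h
  rw [vnEnt_eq_neg_relEnt hA.1, vnEnt_eq_neg_relEnt hB.1, vnEnt_eq_neg_relEnt (hA.add hB).1]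
  linarith

lemma add_mul_binEntropy_div {x y : ℝ} (hx : 0 ≤ x) (hy : 0 ≤ y) :
    (x + y) * Real.binEntropy (y / (x + y))
      = Real.negMulLog x + Real.negMulLog y - Real.negMulLog (x + y) := by
  rcases hx.eq_or_lt with rfl | hx
  · rcases eq_or_ne y 0 with rfl | hy
    · simp
    · simp [div_self hy]
  rcases hy.eq_or_lt with rfl | hy
  · simp
  have hxy : x + y ≠ 0 := by positivity
  have hcompl : 1 - y / (x + y) = x / (x + y) := by
    field_simp
    ring
  rw [Real.binEntropy_eq_negMulLog_add_negMulLog_one_sub, hcompl]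
  simp only [Real.negMulLog, Real.log_div hx.ne' hxy, Real.log_div hy.ne' hxy]
  field_simp
  ring

lemma vnEnt_add_le (hA : A.PosSemidef) (hB : B.PosSemidef) :
    vnEnt (A + B) ≤ vnEnt A + vnEnt B
      + (A.trace.re + B.trace.re) *
          Real.binEntropy (B.trace.re / (A.trace.re + B.trace.re)) := by
  have hA' := relEnt_nonpos_of_le hA (le_add_of_nonneg_right hB.nonneg : A ≤ A + B)
  have hB' := relEnt_nonpos_of_le hB (le_add_of_nonneg_left hA.nonneg : B ≤ A + B)
  rw [add_mul_binEntropy_div (re_trace_nonneg hA)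
      (re_trace_nonneg hB), vnEnt_eq_neg_re_trace_sub (hA.add hB).1,
    vnEnt_eq_neg_re_trace_sub hA.1, vnEnt_eq_neg_re_trace_sub hB.1, Matrix.add_mul]
  simp only [relEnt, trace_add, Complex.add_re] at hA' hB' ⊢
  linarith

end Entropy

section PartialTrace

variable {a b : Type*} [Fintype a]

lemma mSnd_add (X Y : Matrix (a × b) (a × b) ℂ) : mSnd (X + Y) = mSnd X + mSnd Y := by
  ext i j
  simp [mSnd, Finset.sum_add_distrib]

lemma mSnd_eq_sum_submatrix (X : Matrix (a × b) (a × b) ℂ) :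
    mSnd X = ∑ k, X.submatrix (Prod.mk k) (Prod.mk k) := by
  ext i j
  simp [mSnd, Matrix.sum_apply]

lemma posSemidef_mSnd {X : Matrix (a × b) (a × b) ℂ} (hX : X.PosSemidef) :
    (mSnd X).PosSemidef := by
  rw [mSnd_eq_sum_submatrix]
  exact posSemidef_sum _ fun k _ => hX.submatrix _

lemma isHermitian_mSnd {X : Matrix (a × b) (a × b) ℂ} (hX : X.IsHermitian) :
    (mSnd X).IsHermitian := by
  ext i j
  rw [conjTranspose_apply, mSnd, of_apply, of_apply, star_sum]
  exact Finset.sum_congr rfl fun k _ => hX.apply _ _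

lemma trace_mSnd [Fintype b] (X : Matrix (a × b) (a × b) ℂ) : (mSnd X).trace = X.trace := by
  simp [mSnd, trace, Fintype.sum_prod_type_right]

variable [DecidableEq a]

lemma posSemidef_card_smul_one_sub_of_one :
    ((Fintype.card a : ℝ) • (1 : Matrix a a ℂ) - Matrix.of fun _ _ => 1).PosSemidef := by
  rcases isEmpty_or_nonempty a with ha | ha
  · rw [Subsingleton.elim (_ - _) (0 : Matrix a a ℂ)]
    exact .zero
  set J : Matrix a a ℂ := Matrix.of fun _ _ => 1 with hJ
  set M := (Fintype.card a : ℝ) • (1 : Matrix a a ℂ) - J with hM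
  have hd : (0 : ℝ) < Fintype.card a := by exact_mod_cast Fintype.card_pos
  have hJJ : J * J = (Fintype.card a : ℝ) • J := by
    ext i j
    simp [hJ, mul_apply]
  have hJH : Jᴴ = J := by
    ext i j
    simp [hJ]
  have hMM : M = (Fintype.card a : ℝ)⁻¹ • (Mᴴ * M) := by
    rw [eq_inv_smul_iff₀ hd.ne', hM, conjTranspose_sub, conjTranspose_smul, conjTranspose_one, hJH,
      star_trivial, Matrix.sub_mul, Matrix.mul_sub J, hJJ, Matrix.smul_mul, Matrix.one_mul,
      Matrix.mul_smul, Matrix.mul_one, sub_self, sub_zero]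
  rw [hMM]
  exact (posSemidef_conjTranspose_mul_self M).smul (inv_nonneg.mpr hd.le)

lemma le_card_smul_one_kronecker_mSnd [Finite b] {X : Matrix (a × b) (a × b) ℂ}
    (hX : X.PosSemidef) : X ≤ (Fintype.card a : ℝ) • ((1 : Matrix a a ℂ) ⊗ₖ mSnd X) := by
  cases nonempty_fintype b
  -- The difference is the Schur product of `X` with the positive matrix `card a • 1 - J`, where all
  -- entries of `J` are `1`, plus `card a` copies of each block `X_mm` at the places `i ≠ m`.
  have hschur := hX.hadamard
    ((posSemidef_card_smul_one_sub_of_one (a := a)).submatrix (Prod.fst : a × b → a))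
  have hblocks : (∑ m, (diagonal (fun i : a => if i = m then (0 : ℂ) else 1)) ⊗ₖ
      X.submatrix (Prod.mk m) (Prod.mk m)).PosSemidef := by
    refine posSemidef_sum _ fun m _ => PosSemidef.kronecker (PosSemidef.diagonal fun i => ?_)
      (hX.submatrix _)
    by_cases h : i = m <;> simp [h]
  rw [Matrix.le_iff]
  convert hschur.add (hblocks.smul (Nat.cast_nonneg (α := ℝ) (Fintype.card a))) using 1
  ext ⟨i, p⟩ ⟨j, q⟩
  by_cases h : i = j
  · subst h
    simp only [mSnd, Matrix.sub_apply, Matrix.smul_apply, kroneckerMap_apply, one_apply_eq,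
      of_apply, one_mul, Complex.real_smul, Complex.ofReal_natCast, Matrix.add_apply,
      hadamard_apply, submatrix_apply, mul_one, Matrix.sum_apply, diagonal_apply_eq, ite_mul,
      zero_mul, Finset.sum_ite, Finset.sum_const_zero, Finset.filter_ne, Finset.mem_univ,
      Finset.sum_erase_eq_sub, zero_add]
    ring
  · simp [Matrix.sum_apply, h]

lemma posSemidef_one_kronecker_mSnd [Finite b] {X : Matrix (a × b) (a × b) ℂ}
    (hX : X.PosSemidef) : ((1 : Matrix a a ℂ) ⊗ₖ mSnd X).PosSemidef :=
  PosSemidef.one.kronecker (posSemidef_mSnd hX)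

variable [Fintype b]

lemma SupportLE.one_kronecker_mSnd {X : Matrix (a × b) (a × b) ℂ} (hX : X.PosSemidef) :
    SupportLE X ((1 : Matrix a a ℂ) ⊗ₖ mSnd X) :=
  .of_smul (.of_le hX (le_card_smul_one_kronecker_mSnd hX))

lemma trace_mul_one_kronecker (X : Matrix (a × b) (a × b) ℂ) (Z : Matrix b b ℂ) :
    (X * ((1 : Matrix a a ℂ) ⊗ₖ Z)).trace = (mSnd X * Z).trace := by
  simp only [trace, diag_apply, mul_apply, Fintype.sum_prod_type, kroneckerMap_apply, mSnd,
    of_apply, one_apply, ite_mul, one_mul, zero_mul, mul_ite, mul_zero, Finset.sum_mul]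
  rw [Finset.sum_comm]
  refine Finset.sum_congr rfl fun p _ => (Finset.sum_congr rfl fun i _ => ?_).trans Finset.sum_comm
  rw [Fintype.sum_eq_single i fun k hk => by simp [hk]]
  simp

variable [DecidableEq b]

/-- Tensoring with the identity of the first factor, as a homomorphism of star algebras, so that it
commutes with the functional calculus. -/
def oneKronecker (a : Type*) [Fintype a] [DecidableEq a] :
    Matrix b b ℂ →⋆ₐ[ℝ] Matrix (a × b) (a × b) ℂ where
  toFun Z := (1 : Matrix a a ℂ) ⊗ₖ Z
  map_one' := one_kronecker_one
  map_mul' X Y := by rw [← mul_kronecker_mul, Matrix.one_mul]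
  map_zero' := kronecker_zero _
  map_add' := kronecker_add _
  commutes' r := by
    simp only [Algebra.algebraMap_eq_smul_one, kronecker_smul, one_kronecker_one]
  map_star' X := by
    simp only [star_eq_conjTranspose, conjTranspose_kronecker, conjTranspose_one]

open scoped Matrix.Norms.L2Operator in
lemma cfc_one_kronecker {Z : Matrix b b ℂ} (hZ : Z.IsHermitian) (f : ℝ → ℝ) :
    cfc f ((1 : Matrix a a ℂ) ⊗ₖ Z) = (1 : Matrix a a ℂ) ⊗ₖ cfc f Z :=
  ((oneKronecker a).map_cfc f Z (continuousOn_real_spectrum Z f)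
    (LinearMap.continuous_of_finiteDimensional (oneKronecker (b := b) a).toAlgHom.toLinearMap)
    hZ.isSelfAdjoint (hZ.isSelfAdjoint.map (oneKronecker a))).symm

end PartialTrace

section ConditionalEntropy

variable {a b : Type*} [Fintype a] [DecidableEq a] [Fintype b] [DecidableEq b]
  {X Y N P : Matrix (a × b) (a × b) ℂ}

lemma condEnt_eq_neg_relEnt (hX : X.IsHermitian) :
    condEnt X = -relEnt X ((1 : Matrix a a ℂ) ⊗ₖ mSnd X) := by
  rw [relEnt, cfc_one_kronecker (isHermitian_mSnd hX), trace_mul_one_kronecker, condEnt,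
    vnEnt_eq_neg_re_trace_sub hX, vnEnt_eq_neg_re_trace_sub (isHermitian_mSnd hX), trace_mSnd]
  ring

/-- Strong subadditivity of the entropy, as superadditivity of the conditional entropy on the
positive cone. -/
lemma condEnt_add_condEnt_le (hX : X.PosSemidef) (hY : Y.PosSemidef) :
    condEnt X + condEnt Y ≤ condEnt (X + Y) := by
  have h := relEnt_add_le hX hY (posSemidef_one_kronecker_mSnd hX)
    (posSemidef_one_kronecker_mSnd hY) (.one_kronecker_mSnd hX) (.one_kronecker_mSnd hY)
  rw [← kronecker_add, ← mSnd_add] at h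
  rw [condEnt_eq_neg_relEnt hX.1, condEnt_eq_neg_relEnt hY.1, condEnt_eq_neg_relEnt (hX.add hY).1]
  linarith

lemma condEnt_add_le (hX : X.PosSemidef) (hY : Y.PosSemidef) :
    condEnt (X + Y) ≤ condEnt X + condEnt Y
      + (X.trace.re + Y.trace.re) *
          Real.binEntropy (Y.trace.re / (X.trace.re + Y.trace.re)) := by
  have hjoint := vnEnt_add_le hX hY
  have hmarginal := vnEnt_add_vnEnt_le (posSemidef_mSnd hX) (posSemidef_mSnd hY)
  rw [condEnt, condEnt, condEnt, mSnd_add]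
  linarith

lemma abs_condEnt_le (hX : X.PosSemidef) :
    |condEnt X| ≤ X.trace.re * Real.log (Fintype.card a) := by
  rw [condEnt_eq_neg_relEnt hX.1, abs_neg]
  rcases isEmpty_or_nonempty a with ha | ha
  · simp [relEnt, trace]
  have hd : (0 : ℝ) < Fintype.card a := by exact_mod_cast Fintype.card_pos
  have hK := posSemidef_one_kronecker_mSnd hX
  have hsupp := SupportLE.one_kronecker_mSnd hX
  have htr : ((Fintype.card a : ℝ)⁻¹ • ((1 : Matrix a a ℂ) ⊗ₖ mSnd X)).trace.re = X.trace.re := by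
    rw [trace_smul, trace_kronecker, trace_one, trace_mSnd, Complex.smul_re, smul_eq_mul,
      Complex.mul_re, Complex.natCast_re, Complex.natCast_im, zero_mul, sub_zero,
      inv_mul_cancel_left₀ hd.ne']
  have hupper := relEnt_nonpos_of_le hX (le_card_smul_one_kronecker_mSnd hX)
  have hlower := trace_sub_trace_le_relEnt hX (hK.smul (inv_pos.mpr hd).le)
    (.of_smul (r := Fintype.card a) (by rwa [smul_inv_smul₀ hd.ne']))
  rw [relEnt_smul_right hX.1 hK.1 hsupp hd.ne'] at hupper
  rw [htr, relEnt_smul_right hX.1 hK.1 hsupp (inv_ne_zero hd.ne'), Real.log_inv] at hlower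
  exact abs_le.mpr ⟨by linarith, by linarith⟩

lemma condEnt_sub_le (hX : X.PosSemidef) (hY : Y.PosSemidef) (hN : N.PosSemidef)
    (hP : P.PosSemidef) (h : X + N = Y + P) :
    condEnt X - condEnt Y ≤ (N.trace.re + P.trace.re) * Real.log (Fintype.card a)
      + (Y.trace.re + P.trace.re) *
          Real.binEntropy (P.trace.re / (Y.trace.re + P.trace.re)) := by
  have hsuper := condEnt_add_condEnt_le hX hN
  have hsub := condEnt_add_le hY hP
  have hNbound := neg_le_of_abs_le (abs_condEnt_le hN)
  have hPbound := le_of_abs_le (abs_condEnt_le hP)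
  rw [h] at hsuper
  linarith

end ConditionalEntropy

section TraceNorm

variable {n : Type*} [Fintype n] [DecidableEq n] {A : Matrix n n ℂ}

lemma traceNorm_eq_re_trace_abs (M : Matrix n n ℂ) : traceNorm M = (CFC.abs M).trace.re := by
  rw [CFC.abs, CFC.sqrt_eq_real_sqrt _ (star_mul_self_nonneg M), star_eq_conjTranspose,
    cfcₙ_eq_cfc, re_trace_cfc]
  rfl

lemma re_trace_posPart_add_re_trace_negPart (hA : A.IsHermitian) :
    A⁺.trace.re + A⁻.trace.re = traceNorm A := by
  rw [traceNorm_eq_re_trace_abs, ← CFC.posPart_add_negPart A hA.isSelfAdjoint, trace_add,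
    Complex.add_re]

lemma re_trace_posPart (hA : A.IsHermitian) : A⁺.trace.re = (traceNorm A + A.trace.re) / 2 := by
  have hsum := re_trace_posPart_add_re_trace_negPart hA
  have hdiff := congrArg (fun M => M.trace.re) (CFC.posPart_sub_negPart A hA.isSelfAdjoint)
  simp only [trace_sub, Complex.sub_re] at hdiff
  linarith

lemma re_trace_negPart (hA : A.IsHermitian) : A⁻.trace.re = (traceNorm A - A.trace.re) / 2 := by
  linarith [re_trace_posPart_add_re_trace_negPart hA, re_trace_posPart hA]

end TraceNorm

theorem condEnt_continuity_bound_general {a b : Type*} [Fintype a] [DecidableEq a] [Fintype b]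
    [DecidableEq b] {X Y : Matrix (a × b) (a × b) ℂ} (hX : X.PosSemidef) (hY : Y.PosSemidef)
    (htr : X.trace = Y.trace) :
    |condEnt X - condEnt Y|
      ≤ 2 * (traceNorm (X - Y) / 2) * Real.log (Fintype.card a)
        + (X.trace.re + traceNorm (X - Y) / 2) *
            Real.binEntropy
              ((traceNorm (X - Y) / 2) / (X.trace.re + traceNorm (X - Y) / 2)) := by
  have hXY := hX.1.sub hY.1
  have hP : (X - Y)⁺.PosSemidef := (CFC.posPart_nonneg (X - Y)).posSemidef
  have hN : (X - Y)⁻.PosSemidef := (CFC.negPart_nonneg (X - Y)).posSemidef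
  have hsum : X + (X - Y)⁻ = Y + (X - Y)⁺ := by
    rw [add_comm Y, ← sub_eq_sub_iff_add_eq_add, CFC.posPart_sub_negPart _ hXY.isSelfAdjoint]
  have hPtr : (X - Y)⁺.trace.re = traceNorm (X - Y) / 2 := by simp [re_trace_posPart hXY, htr]
  have hNtr : (X - Y)⁻.trace.re = traceNorm (X - Y) / 2 := by simp [re_trace_negPart hXY, htr]
  have hle := condEnt_sub_le hX hY hN hP hsum
  have hge := condEnt_sub_le hY hX hP hN hsum.symm
  rw [← htr, hPtr, hNtr] at hle
  rw [hPtr, hNtr] at hge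
  exact abs_sub_le_iff.mpr ⟨by linarith, by linarith⟩

/-- Continuity bound for the conditional entropy:
`|H(A|B)_{ω¹} − H(A|B)_{ω²}| ≤ 2ε log dim H_A + (1+ε)h₂(ε/(1+ε))` when `ε = ½‖ω¹−ω²‖₁ < 1`. -/
theorem condEnt_continuity_bound {a b : Type*} [Fintype a] [DecidableEq a] [Fintype b]
    [DecidableEq b] (ω₁ ω₂ : Matrix (a × b) (a × b) ℂ) (h1 : IsState ω₁) (h2 : IsState ω₂)
    (hε : traceNorm (ω₁ - ω₂) / 2 < 1) :
    |condEnt ω₁ - condEnt ω₂|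
      ≤ 2 * (traceNorm (ω₁ - ω₂) / 2) * Real.log (Fintype.card a)
        + (1 + traceNorm (ω₁ - ω₂) / 2) *
            Real.binEntropy ((traceNorm (ω₁ - ω₂) / 2) / (1 + traceNorm (ω₁ - ω₂) / 2)) := by
  simpa [h1.2] using condEnt_continuity_bound_general h1.1 h2.1 (h1.2.trans h2.2.symm)
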